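/- Let G > 0, α, β > 0, p, q ≥ 0, M > 0, let 0 ≤ ω₋ ≤ ω₊ < 1, and let L ∈ Gℕ. Let Q = { j ∈ ℤ^d : Λ_G(Gj) ∩ Λ_L ≠ ∅ }. For each j ∈ Q let u_j : [0,1] × ℝ^d → [0,∞) be a bounded measurable function such that: (a) 0 ≤ u_j(t, x) ≤ M·𝟙_{Λ_G(Gj)}(x) for all t ∈ [0,1] and x ∈ ℝ^d; (b) for all 0 ≤ s < t ≤ 1 there exists a point x₀ ∈ ℝ^d (depending on j, s, t) with u_j(t, x) − u_j(s, x) ≥ α(t−s)^p · 𝟙_{B(x₀, β(t−s)^q)}(x) for all x. Let ω = (ω_j)_{j∈Q} with ω_j ∈ [ω₋, ω₊] for all j, and let 0 < μ ≤ 1 − ω₊ with βμ^q < G/2. Then there exists a (G, βμ^q)-equidistributed sequence Z such that for all x ∈ ℝ^d: α μ^p · 𝟙_{S_{βμ^q, Z}(L)}(x) ≤ Σ_{j∈Q} ( u_j(ω_j + μ, x) − u_j(ω_j, x) ) ≤ M. -/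

import Mathlib

/-- The open cube of side length `r` centered at `c` in `ℝ^d`. -/
def openCube (d : ℕ) (c : EuclideanSpace ℝ (Fin d)) (r : ℝ) :
    Set (EuclideanSpace ℝ (Fin d)) :=
  {x | ∀ i, |x i - c i| < r / 2}

/-- The lattice point `G·j ∈ (Gℤ)^d` viewed as a point of `ℝ^d`. -/
def latticeCenter (d : ℕ) (G : ℝ) (j : Fin d → ℤ) : EuclideanSpace ℝ (Fin d) :=
  WithLp.toLp 2 fun i => G * (j i : ℝ)

/-- The set `S_{δ,Z}(L)`: the union of the balls `B(z_j, δ)` over those lattice sites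
`j ∈ (Gℤ)^d` whose cube `Λ_G(j)` is contained in `Λ_L`. -/
def equiUnion (d : ℕ) (G : ℝ) (Z : (Fin d → ℤ) → EuclideanSpace ℝ (Fin d)) (δ L : ℝ) :
    Set (EuclideanSpace ℝ (Fin d)) :=
  ⋃ j ∈ {j : Fin d → ℤ | openCube d (latticeCenter d G j) G ⊆ openCube d 0 L},
    Metric.ball (Z j) δ

/-- The index set `Q` of lattice sites `j ∈ ℤ^d` whose cube `Λ_G(Gj)` meets `Λ_L`. -/
def indexSetQ (d : ℕ) (G L : ℝ) : Set (Fin d → ℤ) :=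
  {j | (openCube d (latticeCenter d G j) G ∩ openCube d 0 L).Nonempty}

/-
An increment squeezed between `a μ · 𝟙_{B(z_j, r μ)}` and `M · 𝟙_{Λ_G(Gj)}` with `a μ > 0` forces
`B(z_j, r μ) ⊆ Λ_G(Gj)`, so the balls supplied by the growth assumption form an equidistributed
sequence once it is completed by the cube centers outside `Q`. The cubes being pairwise disjoint, at
most one term of the sum is nonzero at each point; summing the squeeze over `Q` therefore turns both
families of indicators into the indicators of their unions.
-/

section DisjointFamilies

open Function

variable {ι X : Type*} {A B : ι → Set X}

theorem summable_of_support_subset_of_pairwise_disjoint {E : Type*} [AddCommMonoid E]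
    [TopologicalSpace E] {v : ι → X → E} (hA : Pairwise (Disjoint on A))
    (hv : ∀ i, support (v i) ⊆ A i) (x : X) : Summable fun i => v i x := by
  have hsub : (support fun i => v i x).Subsingleton := fun i hi j hj =>
    hA.eq (Set.not_disjoint_iff.2 ⟨x, hv i hi, hv j hj⟩)
  exact summable_of_hasFiniteSupport hsub.finite

theorem summable_indicator_of_pairwise_disjoint {E : Type*} [AddCommMonoid E] [TopologicalSpace E]
    (hA : Pairwise (Disjoint on A)) (f : X → E) (x : X) :
    Summable fun i => (A i).indicator f x :=
  summable_of_support_subset_of_pairwise_disjoint hA (fun _ => Set.support_indicator_subset) x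

theorem support_subset_of_indicator_le_of_le_indicator {E : Type*} [Zero E] [PartialOrder E]
    {s t : Set X} {f g v : X → E} (hst : s ⊆ t) (hlower : s.indicator f ≤ v)
    (hupper : v ≤ t.indicator g) : support v ⊆ t := by
  refine support_subset_iff'.2 fun x hx => le_antisymm ?_ ?_
  · simpa only [Set.indicator_of_notMem hx] using hupper x
  · simpa only [Set.indicator_of_notMem (Set.notMem_subset hst hx)] using hlower x

theorem subset_of_indicator_le_indicator {E : Type*} [Zero E] [Preorder E] {s t : Set X}
    {f g : X → E} (hf : ∀ x ∈ s, 0 < f x) (hle : s.indicator f ≤ t.indicator g) : s ⊆ t := by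
  intro x hxs
  by_contra hxt
  have hfx : f x ≤ 0 := by
    simpa only [Set.indicator_of_mem hxs, Set.indicator_of_notMem hxt] using hle x
  exact (hf x hxs).not_ge hfx

theorem indicator_iUnion_le_tsum_and_tsum_le_indicator_iUnion {E : Type*} [AddCommMonoid E]
    [PartialOrder E] [IsOrderedAddMonoid E] [TopologicalSpace E] [OrderClosedTopology E]
    {f g : X → E} {v : ι → X → E}
    (hA : Pairwise (Disjoint on A)) (hBA : ∀ i, B i ⊆ A i)
    (hlower : ∀ i, (B i).indicator f ≤ v i) (hupper : ∀ i, v i ≤ (A i).indicator g) (x : X) :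
    (⋃ i, B i).indicator f x ≤ ∑' i, v i x ∧ ∑' i, v i x ≤ (⋃ i, A i).indicator g x := by
  have hB : Pairwise (Disjoint on B) := hA.mono fun i j => Disjoint.mono (hBA i) (hBA j)
  have hv : Summable fun i => v i x := summable_of_support_subset_of_pairwise_disjoint hA
    (fun i => support_subset_of_indicator_le_of_le_indicator (hBA i) (hlower i) (hupper i)) x
  rw [indicator_iUnion_of_pairwise_disjoint B hB f,
    indicator_iUnion_of_pairwise_disjoint A hA g]
  exact ⟨(summable_indicator_of_pairwise_disjoint hB f x).tsum_le_tsum (fun i => hlower i x) hv,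
    hv.tsum_le_tsum (fun i => hupper i x) (summable_indicator_of_pairwise_disjoint hA g x)⟩

end DisjointFamilies

section Lattice

open Function

variable {d : ℕ} {G L δ : ℝ}

theorem ball_subset_openCube (c : EuclideanSpace ℝ (Fin d)) (r : ℝ) :
    Metric.ball c (r / 2) ⊆ openCube d c r := fun x hx i =>
  calc |x i - c i| = ‖(x - c) i‖ := rfl
    _ ≤ ‖x - c‖ := PiLp.norm_apply_le (x - c) i
    _ < r / 2 := mem_ball_iff_norm.1 hx

theorem pairwise_disjoint_openCube_latticeCenter (d : ℕ) (G : ℝ) :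
    Pairwise (Disjoint on fun k => openCube d (latticeCenter d G k) G) := by
  intro j k hjk
  refine Set.disjoint_left.2 fun x hj hk => hjk (funext fun i => ?_)
  have hG : 0 < G := by linarith [(abs_nonneg _).trans_lt (hj i)]
  have hcenters : G * |(j i : ℝ) - k i| < G * 1 :=
    calc G * |(j i : ℝ) - k i| = |G * j i - G * k i| := by
          rw [← mul_sub, abs_mul, abs_of_pos hG]
      _ ≤ |G * j i - x i| + |x i - G * k i| := abs_sub_le _ _ _
      _ < G / 2 + G / 2 := add_lt_add (abs_sub_comm (x i) _ ▸ hj i) (hk i)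
      _ = G * 1 := by ring
  have hlt : |j i - k i| < 1 := by exact_mod_cast lt_of_mul_lt_mul_left hcenters hG.le
  exact sub_eq_zero.1 (Int.abs_lt_one_iff.1 hlt)

theorem equiUnion_subset_iUnion_indexSetQ {Z : (Fin d → ℤ) → EuclideanSpace ℝ (Fin d)}
    (hZ : ∀ k, Metric.ball (Z k) δ ⊆ openCube d (latticeCenter d G k) G) :
    equiUnion d G Z δ L ⊆ ⋃ k : indexSetQ d G L, Metric.ball (Z k) δ := by
  refine Set.iUnion₂_subset fun k hk x hx => ?_
  have hkQ : k ∈ indexSetQ d G L := ⟨x, hZ k hx, hk (hZ k hx)⟩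
  exact Set.mem_iUnion.2 ⟨⟨k, hkQ⟩, hx⟩

theorem exists_equidistributed_ball_indicator_le {c M : ℝ}
    {v : (Fin d → ℤ) → EuclideanSpace ℝ (Fin d) → ℝ} {Q : Set (Fin d → ℤ)}
    (hc : 0 < c) (hδ : δ ≤ G / 2)
    (hlower : ∀ k ∈ Q, ∃ z, (Metric.ball z δ).indicator (fun _ => c) ≤ v k)
    (hupper : ∀ k ∈ Q, v k ≤ (openCube d (latticeCenter d G k) G).indicator fun _ => M) :
    ∃ Z : (Fin d → ℤ) → EuclideanSpace ℝ (Fin d),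
      (∀ k, Metric.ball (Z k) δ ⊆ openCube d (latticeCenter d G k) G) ∧
      ∀ k ∈ Q, (Metric.ball (Z k) δ).indicator (fun _ => c) ≤ v k := by
  suffices h : ∀ k, ∃ z, Metric.ball z δ ⊆ openCube d (latticeCenter d G k) G ∧
      (k ∈ Q → (Metric.ball z δ).indicator (fun _ => c) ≤ v k) by
    choose Z hcube hv using h
    exact ⟨Z, hcube, hv⟩
  intro k
  by_cases hk : k ∈ Q
  · obtain ⟨z, hz⟩ := hlower k hk
    exact ⟨z, subset_of_indicator_le_indicator (fun _ _ => hc) (hz.trans (hupper k hk)),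
      fun _ => hz⟩
  · exact ⟨latticeCenter d G k, (Metric.ball_subset_ball hδ).trans (ball_subset_openCube _ _),
      fun h => absurd h hk⟩

theorem exists_equidistributed_indicator_equiUnion_le_tsum_and_tsum_le {c M : ℝ}
    {v : (Fin d → ℤ) → EuclideanSpace ℝ (Fin d) → ℝ}
    (hc : 0 < c) (hM : 0 ≤ M) (hδ : δ ≤ G / 2)
    (hlower : ∀ k ∈ indexSetQ d G L, ∃ z, (Metric.ball z δ).indicator (fun _ => c) ≤ v k)
    (hupper : ∀ k ∈ indexSetQ d G L,
      v k ≤ (openCube d (latticeCenter d G k) G).indicator fun _ => M) :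
    ∃ Z : (Fin d → ℤ) → EuclideanSpace ℝ (Fin d),
      (∀ k, Metric.ball (Z k) δ ⊆ openCube d (latticeCenter d G k) G) ∧
      ∀ x, (equiUnion d G Z δ L).indicator (fun _ => c) x ≤ ∑' k : indexSetQ d G L, v k x ∧
        ∑' k : indexSetQ d G L, v k x ≤ M := by
  obtain ⟨Z, hZ, hv⟩ := exists_equidistributed_ball_indicator_le hc hδ hlower hupper
  refine ⟨Z, hZ, fun x => ?_⟩
  have hdisj : Pairwise (Disjoint on fun k : indexSetQ d G L =>
      openCube d (latticeCenter d G k) G) :=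
    (pairwise_disjoint_openCube_latticeCenter d G).comp_of_injective Subtype.val_injective
  obtain ⟨hle, hge⟩ := indicator_iUnion_le_tsum_and_tsum_le_indicator_iUnion hdisj
    (fun k => hZ k) (fun k => hv k k.2) (fun k => hupper k k.2) x
  exact ⟨(Set.indicator_le_indicator_of_subset (equiUnion_subset_iUnion_indexSetQ hZ)
      (fun _ => hc.le) x).trans hle,
    hge.trans (Set.indicator_le_self' (fun _ _ => hM) x)⟩

end Lattice

theorem random_perturbation_increment_bounds_general {d : ℕ} {G M L μ : ℝ} {a r : ℝ → ℝ}
    (hM : 0 ≤ M) {u : (Fin d → ℤ) → ℝ → EuclideanSpace ℝ (Fin d) → ℝ}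
    (hu_nonneg : ∀ j ∈ indexSetQ d G L, ∀ t ∈ Set.Icc (0 : ℝ) 1, ∀ x, 0 ≤ u j t x)
    (hu_bdd : ∀ j ∈ indexSetQ d G L, ∀ t ∈ Set.Icc (0 : ℝ) 1, ∀ x,
      u j t x ≤ M * Set.indicator (openCube d (latticeCenter d G j) G) (fun _ => (1 : ℝ)) x)
    (hu_mono : ∀ j ∈ indexSetQ d G L, ∀ s t : ℝ, 0 ≤ s → s < t → t ≤ 1 →
      ∃ x₀ : EuclideanSpace ℝ (Fin d), ∀ x,
        a (t - s) * Set.indicator (Metric.ball x₀ (r (t - s))) (fun _ => (1 : ℝ)) x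
          ≤ u j t x - u j s x)
    {ω : (Fin d → ℤ) → ℝ} (hω : ∀ j ∈ indexSetQ d G L, 0 ≤ ω j ∧ ω j + μ ≤ 1)
    (hμ : 0 < μ) (ha : 0 < a μ) (hr : r μ ≤ G / 2) :
    ∃ Z : (Fin d → ℤ) → EuclideanSpace ℝ (Fin d),
      (∀ k, Metric.ball (Z k) (r μ) ⊆ openCube d (latticeCenter d G k) G) ∧
      ∀ x : EuclideanSpace ℝ (Fin d),
        a μ * Set.indicator (equiUnion d G Z (r μ) L) (fun _ => (1 : ℝ)) x
            ≤ ∑' j : indexSetQ d G L, (u j (ω j + μ) x - u j (ω j) x) ∧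
          ∑' j : indexSetQ d G L, (u j (ω j + μ) x - u j (ω j) x) ≤ M := by
  simp only [← Set.indicator_const_mul, mul_one] at hu_bdd hu_mono ⊢
  refine exists_equidistributed_indicator_equiUnion_le_tsum_and_tsum_le
    (v := fun j x => u j (ω j + μ) x - u j (ω j) x) ha hM hr (fun j hj => ?_) (fun j hj x => ?_)
  · obtain ⟨hω0, hω1⟩ := hω j hj
    simpa only [Pi.le_def, add_sub_cancel_left] using
      hu_mono j hj (ω j) (ω j + μ) hω0 (lt_add_of_pos_right _ hμ) hω1
  · obtain ⟨hω0, hω1⟩ := hω j hj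
    exact (sub_le_self _ (hu_nonneg j hj (ω j) ⟨hω0, by linarith⟩ x)).trans
      (hu_bdd j hj (ω j + μ) ⟨by linarith, hω1⟩ x)

/-- Inequality (4.1) in the proof of the Wegner estimate: increasing all random parameters
by `μ` lifts the effective perturbation `V_ω^Q = Σ_{j∈Q} u_j(ω_j, ·)` at least by
`αμ^p·𝟙_{S_{βμ^q,Z}(L)}` for a suitable `(G, βμ^q)`-equidistributed sequence `Z`, while the
increment stays bounded by `M`. -/
theorem random_perturbation_increment_bounds
    (d : ℕ) (G α β p q M ωm ωp L μ : ℝ)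
    (hG : 0 < G) (hα : 0 < α) (hβ : 0 < β) (hp : 0 ≤ p) (hq : 0 ≤ q) (hM : 0 < M)
    (hωm : 0 ≤ ωm) (hωmp : ωm ≤ ωp) (hωp : ωp < 1)
    (n : ℕ) (hL : L = G * n)
    (u : (Fin d → ℤ) → ℝ → EuclideanSpace ℝ (Fin d) → ℝ)
    (hu_meas : ∀ j ∈ indexSetQ d G L, Measurable (Function.uncurry (u j)))
    (hu_nonneg : ∀ j ∈ indexSetQ d G L, ∀ t ∈ Set.Icc (0 : ℝ) 1, ∀ x, 0 ≤ u j t x)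
    (hu_bdd : ∀ j ∈ indexSetQ d G L, ∀ t ∈ Set.Icc (0 : ℝ) 1, ∀ x,
      u j t x ≤ M * Set.indicator (openCube d (latticeCenter d G j) G) (fun _ => (1 : ℝ)) x)
    (hu_mono : ∀ j ∈ indexSetQ d G L, ∀ s t : ℝ, 0 ≤ s → s < t → t ≤ 1 →
      ∃ x₀ : EuclideanSpace ℝ (Fin d), ∀ x,
        α * (t - s) ^ p * Set.indicator (Metric.ball x₀ (β * (t - s) ^ q)) (fun _ => (1 : ℝ)) x
          ≤ u j t x - u j s x)
    (ω : (Fin d → ℤ) → ℝ) (hω : ∀ j, ω j ∈ Set.Icc ωm ωp)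
    (hμ0 : 0 < μ) (hμ : μ ≤ 1 - ωp) (hμG : β * μ ^ q < G / 2) :
    ∃ Z : (Fin d → ℤ) → EuclideanSpace ℝ (Fin d),
      (∀ k, Metric.ball (Z k) (β * μ ^ q) ⊆ openCube d (latticeCenter d G k) G) ∧
      ∀ x : EuclideanSpace ℝ (Fin d),
        α * μ ^ p * Set.indicator (equiUnion d G Z (β * μ ^ q) L) (fun _ => (1 : ℝ)) x
            ≤ ∑' j : indexSetQ d G L, (u j (ω j + μ) x - u j (ω j) x) ∧
          ∑' j : indexSetQ d G L, (u j (ω j + μ) x - u j (ω j) x) ≤ M :=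
  random_perturbation_increment_bounds_general (a := fun τ => α * τ ^ p) (r := fun τ => β * τ ^ q)
    hM.le hu_nonneg hu_bdd hu_mono
    (fun j _ => ⟨hωm.trans (hω j).1, by linarith [(hω j).2]⟩)
    hμ0 (mul_pos hα (Real.rpow_pos_of_pos hμ0 p)) hμG.le
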